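/- arXiv:2502.04146 — 3 statements merged into one kernel-verified Lean document; each statement's English description precedes it below -/
import Mathlib

section
/- For every finite standard closure space (U, φ) with closure lattice (C, ⊆), there exists a finite standard closure space (T, ψ) with closure lattice (F, ⊆) such that (C, ⊆) is isomorphic to a sublattice of (F, ⊆) and the E-base of (T, ψ) is valid. -/
namespace EBaseFormal

open Set

variable {α : Type*}

/-- `φ` is a closure operator on subsets of `α`. -/
def IsClosureOp (φ : Set α → Set α) : Prop :=
  (∀ X, X ⊆ φ X) ∧ (∀ X, φ (φ X) = φ X) ∧ ∀ X Y : Set α, X ⊆ Y → φ X ⊆ φ Y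

/-- `C` is a closed set of the closure space. -/
def IsClosedSet (φ : Set α → Set α) (C : Set α) : Prop :=
  φ C = C

/-- The closure space is standard: `φ {x} \ {x}` is closed for every `x`. -/
def IsStandard (φ : Set α → Set α) : Prop :=
  ∀ x : α, IsClosedSet φ (φ {x} \ {x})

/-- The binary part `φ^b` of the closure operator. -/
def binPart (φ : Set α → Set α) (X : Set α) : Set α :=
  ⋃ x ∈ X, φ {x}

/-- `A` is a D-generator of `x`. -/
def IsDGen (φ : Set α → Set α) (x : α) (A : Set α) : Prop :=
  x ∈ φ A ∧ x ∉ binPart φ A ∧ ∀ B : Set α, binPart φ B ⊂ binPart φ A → x ∉ φ B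

/-- `A` is an E-generator of `x`: a D-generator whose closure is inclusion-minimal
among the closures of D-generators of `x`. -/
def IsEGen (φ : Set α → Set α) (x : α) (A : Set α) : Prop :=
  IsDGen φ x A ∧ ∀ B : Set α, IsDGen φ x B → φ B ⊆ φ A → φ B = φ A

/-- The E-base of the closure space: all valid nontrivial binary implications
together with the implications `A → {x}` for `A` an E-generator of `x`. -/
def EBase (φ : Set α → Set α) : Set (Set α × Set α) :=
  {p | ∃ a x : α, p = ({a}, {x}) ∧ x ∈ φ {a} ∧ x ≠ a} ∪
    {p | ∃ (x : α) (A : Set α), p = (A, {x}) ∧ IsEGen φ x A}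

/-- `Y` satisfies all implications of `S`. -/
def ImpClosedSet (S : Set (Set α × Set α)) (Y : Set α) : Prop :=
  ∀ p ∈ S, p.1 ⊆ Y → p.2 ⊆ Y

/-- The closure of `Z` under the implications in `S`: the smallest set containing
`Z` satisfying all implications of `S`. -/
def ImpClosure (S : Set (Set α × Set α)) (Z : Set α) : Set α :=
  ⋂₀ {Y : Set α | Z ⊆ Y ∧ ImpClosedSet S Y}

/-- The E-base is valid: its induced closure operator is `φ`. -/
def EBaseValid (φ : Set α → Set α) : Prop :=
  ∀ Z : Set α, ImpClosure (EBase φ) Z = φ Z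

/-- `Q` is quasi-closed. -/
def QuasiClosed (φ : Set α → Set α) (Q : Set α) : Prop :=
  ∀ X ⊆ Q, φ X ⊂ φ Q → φ X ⊆ Q

/-- `P` is pseudo-closed: non-closed and inclusion-minimal among the quasi-closed
sets spanning `φ P`. -/
def PseudoClosed (φ : Set α → Set α) (P : Set α) : Prop :=
  ¬ IsClosedSet φ P ∧ QuasiClosed φ P ∧
    ∀ Q : Set α, QuasiClosed φ Q → φ Q = φ P → Q ⊆ P → Q = P

/-- `C` is an essential closed set. -/
def Essential (φ : Set α → Set α) (C : Set α) : Prop :=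
  IsClosedSet φ C ∧ ∃ P : Set α, PseudoClosed φ P ∧ φ P = C

/-- The canonical (Duquenne–Guigues) base. -/
def DGBase (φ : Set α → Set α) : Set (Set α × Set α) :=
  {p | ∃ P : Set α, PseudoClosed φ P ∧ p = (P, φ P \ P)}

/-- `C'` is a predecessor (lower cover) of `C` in the closure lattice. -/
def Predecessor (φ : Set α → Set α) (C' C : Set α) : Prop :=
  IsClosedSet φ C' ∧ IsClosedSet φ C ∧ C' ⊂ C ∧
    ∀ C'' : Set α, IsClosedSet φ C'' → C' ⊂ C'' → C'' ⊆ C → C'' = C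

/-- The closure lattice is join-semidistributive. -/
def JoinSemidistrib (φ : Set α → Set α) : Prop :=
  ∀ C1 C2 C3 : Set α, IsClosedSet φ C1 → IsClosedSet φ C2 → IsClosedSet φ C3 →
    φ (C1 ∪ C2) = φ (C1 ∪ C3) → φ (C1 ∪ C2) = φ (C1 ∪ C2 ∩ C3)

/-- The closure lattice is meet-semidistributive. -/
def MeetSemidistrib (φ : Set α → Set α) : Prop :=
  ∀ C1 C2 C3 : Set α, IsClosedSet φ C1 → IsClosedSet φ C2 → IsClosedSet φ C3 →
    C1 ∩ C2 = C1 ∩ C3 → C1 ∩ C2 = C1 ∩ φ (C2 ∪ C3)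

/-- The closure lattice is semidistributive. -/
def Semidistrib (φ : Set α → Set α) : Prop :=
  JoinSemidistrib φ ∧ MeetSemidistrib φ

/-- The closure lattice is modular: `a ≤ b → (b ∧ c) ∨ a = b ∧ (c ∨ a)`. -/
def ModularLattice (φ : Set α → Set α) : Prop :=
  ∀ A B C : Set α, IsClosedSet φ A → IsClosedSet φ B → IsClosedSet φ C →
    A ⊆ B → φ (B ∩ C ∪ A) = B ∩ φ (C ∪ A)

/-- The closure lattice is atomistic (in a standard space). -/
def Atomistic (φ : Set α → Set α) : Prop :=
  ∀ x : α, φ {x} = ({x} : Set α)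

/-- The closure lattice is upper-semimodular. -/
def UpperSemimodular (φ : Set α → Set α) : Prop :=
  ∀ C1 C2 : Set α, IsClosedSet φ C1 → IsClosedSet φ C2 →
    Predecessor φ (C1 ∩ C2) C1 → Predecessor φ C2 (φ (C1 ∪ C2))

/-- The closure lattice is geometric: atomistic and upper-semimodular. -/
def Geometric (φ : Set α → Set α) : Prop :=
  Atomistic φ ∧ UpperSemimodular φ

/-- `x` is prime in the lattice `(↓C, ⊆)` of closed subsets of `C`. -/
def PrimeIn (φ : Set α → Set α) (C : Set α) (x : α) : Prop :=
  ∀ C1 C2 : Set α, IsClosedSet φ C1 → IsClosedSet φ C2 → C1 ⊆ C → C2 ⊆ C →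
    φ {x} ⊆ φ (C1 ∪ C2) → φ {x} ⊆ C1 ∨ φ {x} ⊆ C2

/-- `x ∈ C` is almost prime in `(↓C, ⊆)`. -/
def AlmostPrimeIn (φ : Set α → Set α) (C : Set α) (x : α) : Prop :=
  x ∈ C ∧ ¬ PrimeIn φ C x ∧
    ∀ C' : Set α, Predecessor φ C' C → x ∈ C' → PrimeIn φ C' x

/-- `A` is a `φ^b`-minimal spanning set of the closed set `C`. -/
def BMinSpanning (φ : Set α → Set α) (C A : Set α) : Prop :=
  φ A = C ∧ ∀ B : Set α, binPart φ B ⊂ binPart φ A → φ B ≠ C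

/-- `C` is join-irreducible: nonempty and whenever it is a join of two closed sets
it equals one of them. -/
def JoinIrred (φ : Set α → Set α) (C : Set α) : Prop :=
  IsClosedSet φ C ∧ C ≠ ∅ ∧
    ∀ C1 C2 : Set α, IsClosedSet φ C1 → IsClosedSet φ C2 →
      C = φ (C1 ∪ C2) → C = C1 ∨ C = C2

/-- `C` is join-irreducible: nonempty with a unique predecessor. -/
def JoinIrredUP (φ : Set α → Set α) (C : Set α) : Prop :=
  IsClosedSet φ C ∧ C ≠ ∅ ∧ ∃! C' : Set α, Predecessor φ C' C

/-!
Call a family of implications `P → K` isolated if every premise has at least two elements and is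
disjoint from its conclusion, and no premise is contained in `Q ∪ L` for another implication
`Q → L`. Closing `P` then fires `P → K` and nothing else, and every other subset of `P ∪ K` that
omits a point of `P` is already closed. So singletons are closed and `P` is an E-generator of each
point of `K`: the E-base contains the family, hence is valid.

Any closure operator `φ` on `α` can be encoded by an isolated family. Replace each point of `α` by
copies labelled by the pairs `(A, x)`, and let an implication `A → x` of `φ` be fired only by the
copies of `A` labelled `(A, x)`, yielding all copies of `x`. Different implications then have
disjoint premises, and when `A` has two elements its copies are not all copies of one point, so
they are not covered by a conclusion. Premises with at least two elements suffice for joins, since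
the union of two closed sets is closed whenever it has at most one element.
-/

section ImpClosure

variable {S : Set (Set α × Set α)} {Y Z : Set α}

theorem subset_impClosure : Z ⊆ ImpClosure S Z :=
  subset_sInter fun _ hY => hY.1

theorem impClosure_subset (hZY : Z ⊆ Y) (hY : ImpClosedSet S Y) : ImpClosure S Z ⊆ Y :=
  sInter_subset_of_mem ⟨hZY, hY⟩

theorem impClosedSet_impClosure : ImpClosedSet S (ImpClosure S Z) := fun p hp hsub =>
  subset_sInter fun _ hY => hY.2 p hp (hsub.trans (impClosure_subset hY.1 hY.2))

theorem ImpClosedSet.isClosedSet (hY : ImpClosedSet S Y) : IsClosedSet (ImpClosure S) Y :=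
  (impClosure_subset subset_rfl hY).antisymm subset_impClosure

theorem isClosureOp_impClosure (S : Set (Set α × Set α)) : IsClosureOp (ImpClosure S) :=
  ⟨fun _ => subset_impClosure, fun _ => impClosedSet_impClosure.isClosedSet,
    fun _ _ hXY => impClosure_subset (hXY.trans subset_impClosure) impClosedSet_impClosure⟩

end ImpClosure

section ClosureOp

variable {φ : Set α → Set α} {A C C₁ C₂ : Set α}

theorem IsClosureOp.subset_of_isClosedSet (hφ : IsClosureOp φ) (hC : IsClosedSet φ C)
    (hA : A ⊆ C) : φ A ⊆ C :=
  (hφ.2.2 A C hA).trans hC.subset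

theorem nontrivial_union_or_isClosedSet (h₁ : IsClosedSet φ C₁) (h₂ : IsClosedSet φ C₂) :
    (C₁ ∪ C₂).Nontrivial ∨ IsClosedSet φ (C₁ ∪ C₂) := by
  rw [or_iff_not_imp_left, not_nontrivial_iff]
  intro hsub
  obtain rfl | ⟨x, hx⟩ := C₁.eq_empty_or_nonempty
  · rwa [empty_union]
  · have hC₂ : C₂ ⊆ C₁ := fun y hy => hsub (Or.inl hx) (Or.inr hy) ▸ hx
    rwa [union_eq_left.2 hC₂]

theorem Atomistic.binPart_eq (h : Atomistic φ) (X : Set α) : binPart φ X = X := by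
  simp only [binPart, h _, biUnion_of_singleton]

theorem Atomistic.isStandard (h : Atomistic φ) (hempty : IsClosedSet φ ∅) : IsStandard φ := by
  intro x
  rwa [h x, sdiff_self]

theorem IsClosureOp.impClosedSet_eBase (hφ : IsClosureOp φ) (hC : IsClosedSet φ C) :
    ImpClosedSet (EBase φ) C := by
  rintro _ (⟨a, x, rfl, hx, -⟩ | ⟨x, A, rfl, hA⟩) hsub
  · exact singleton_subset_iff.2 (hφ.subset_of_isClosedSet hC hsub hx)
  · exact singleton_subset_iff.2 (hφ.subset_of_isClosedSet hC hsub hA.1.1)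

theorem eBaseValid_impClosure {S : Set (Set α × Set α)}
    (hS : ∀ p ∈ S, ∀ x ∈ p.2, IsEGen (ImpClosure S) x p.1) : EBaseValid (ImpClosure S) := by
  refine fun Z => Subset.antisymm ?_ ?_
  · have hφ := isClosureOp_impClosure S
    exact impClosure_subset (hφ.1 Z) (hφ.impClosedSet_eBase (hφ.2.1 Z))
  · refine impClosure_subset subset_impClosure fun p hp hsub x hx => ?_
    have hmem : (p.1, {x}) ∈ EBase (ImpClosure S) := Or.inr ⟨x, p.1, rfl, hS p hp x hx⟩
    exact singleton_subset_iff.1 (impClosedSet_impClosure _ hmem hsub)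

end ClosureOp

/-- A family of implications that cannot trigger one another: the premise of an implication of `S`
is not contained in the premise and conclusion of any other one. Nontrivial premises rule out
binary implications and implications with empty premise. -/
structure IsIsolated (S : Set (Set α × Set α)) : Prop where
  nontrivial : ∀ p ∈ S, p.1.Nontrivial
  disjoint : ∀ p ∈ S, Disjoint p.1 p.2
  eq_of_subset : ∀ p ∈ S, ∀ q ∈ S, p.1 ⊆ q.1 ∪ q.2 → p = q

namespace IsIsolated

variable {S : Set (Set α × Set α)} {p : Set α × Set α} {B : Set α}

theorem isClosedSet_of_subsingleton (hS : IsIsolated S) (hB : B.Subsingleton) :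
    IsClosedSet (ImpClosure S) B :=
  ImpClosedSet.isClosedSet fun p hp hsub =>
    absurd (hB.anti hsub) (not_subsingleton_iff.2 (hS.nontrivial p hp))

theorem atomistic (hS : IsIsolated S) : Atomistic (ImpClosure S) := fun _ =>
  hS.isClosedSet_of_subsingleton subsingleton_singleton

theorem isStandard (hS : IsIsolated S) : IsStandard (ImpClosure S) :=
  hS.atomistic.isStandard (hS.isClosedSet_of_subsingleton subsingleton_empty)

theorem impClosure_premise_subset (hS : IsIsolated S) (hp : p ∈ S) :
    ImpClosure S p.1 ⊆ p.1 ∪ p.2 := by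
  refine impClosure_subset subset_union_left fun q hq hsub => ?_
  obtain rfl := hS.eq_of_subset q hq p hp hsub
  exact subset_union_right

theorem isClosedSet_of_not_premise_subset (hS : IsIsolated S) (hp : p ∈ S) (hB : B ⊆ p.1 ∪ p.2)
    (hpB : ¬ p.1 ⊆ B) : IsClosedSet (ImpClosure S) B := by
  refine ImpClosedSet.isClosedSet fun q hq hsub => ?_
  obtain rfl := hS.eq_of_subset q hq p hp (hsub.trans hB)
  exact absurd hsub hpB

theorem isDGen (hS : IsIsolated S) (hp : p ∈ S) {x : α} (hx : x ∈ p.2) :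
    IsDGen (ImpClosure S) x p.1 := by
  have hxp : x ∉ p.1 := disjoint_right.1 (hS.disjoint p hp) hx
  simp only [IsDGen, hS.atomistic.binPart_eq]
  refine ⟨impClosedSet_impClosure p hp subset_impClosure hx, hxp, fun B hB hxB => hxp ?_⟩
  have hBclosed := hS.isClosedSet_of_not_premise_subset hp
    (hB.subset.trans subset_union_left) hB.not_subset
  exact hB.subset (hBclosed.subset hxB)

theorem isEGen (hS : IsIsolated S) (hp : p ∈ S) {x : α} (hx : x ∈ p.2) :
    IsEGen (ImpClosure S) x p.1 := by
  refine ⟨hS.isDGen hp hx, fun B ⟨hxB, hxB', _⟩ hsub => hsub.antisymm ?_⟩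
  rw [hS.atomistic.binPart_eq] at hxB'
  have hpB : p.1 ⊆ B := by
    by_contra hpB
    have hBsub : B ⊆ p.1 ∪ p.2 :=
      subset_impClosure.trans (hsub.trans (hS.impClosure_premise_subset hp))
    exact hxB' ((hS.isClosedSet_of_not_premise_subset hp hBsub hpB).subset hxB)
  exact (isClosureOp_impClosure S).2.2 _ _ hpB

theorem eBaseValid (hS : IsIsolated S) : EBaseValid (ImpClosure S) :=
  eBaseValid_impClosure fun _ hp _ hx => hS.isEGen hp hx

end IsIsolated

section LabelledCopies

variable {β : Type*} {φ : Set α → Set α} {f : β → α × Set α × α} {C X : Set α}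

/-- All copies of the points of `C`, where `f t = (a, A, x)` means that `t : β` is a copy of `a`
with label `(A, x)`. -/
def copies (f : β → α × Set α × α) (C : Set α) : Set β :=
  {t | (f t).1 ∈ C}

/-- The copies of the points of `A` labelled by the implication `A → x`. -/
def labelledCopies (f : β → α × Set α × α) (A : Set α) (x : α) : Set β :=
  {t | (f t).1 ∈ A ∧ (f t).2 = (A, x)}

/-- The encoding of `φ` on the copies: each implication `A → x` of `φ` with `A` nontrivial and
`x ∉ A` leads from the copies of `A` carrying its own label to all copies of `x`. -/
def labelledImplications (φ : Set α → Set α) (f : β → α × Set α × α) : Set (Set β × Set β) :=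
  {p | ∃ A x, A.Nontrivial ∧ x ∈ φ A \ A ∧ p = (labelledCopies f A x, copies f {x})}

theorem labelledCopies_subset_copies {A : Set α} (x : α) (hA : A ⊆ C) :
    labelledCopies f A x ⊆ copies f C := fun _ ht => hA ht.1

theorem exists_mem_labelledCopies (hf : f.Surjective) {A : Set α} {a : α} (ha : a ∈ A) (x : α) :
    ∃ t ∈ labelledCopies f A x, (f t).1 = a := by
  obtain ⟨t, ht⟩ := hf (a, A, x)
  exact ⟨t, by simp [labelledCopies, ht, ha], by rw [ht]⟩

theorem copies_subset_copies_iff (hf : f.Surjective) {C₁ C₂ : Set α} :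
    copies f C₁ ⊆ copies f C₂ ↔ C₁ ⊆ C₂ := by
  have hfst : (Prod.fst ∘ f).Surjective := fun a =>
    (hf (a, ∅, a)).imp fun _ ht => congrArg Prod.fst ht
  exact hfst.preimage_subset_preimage_iff

theorem subset_of_labelledCopies_subset_copies (hf : f.Surjective) {A : Set α} {x : α}
    (h : labelledCopies f A x ⊆ copies f C) : A ⊆ C := by
  intro a ha
  obtain ⟨t, ht, rfl⟩ := exists_mem_labelledCopies hf ha x
  exact h ht

theorem isIsolated_labelledImplications (hf : f.Surjective) :
    IsIsolated (labelledImplications φ f) where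
  nontrivial := by
    rintro _ ⟨A, x, ⟨a, ha, b, hb, hab⟩, -, rfl⟩
    obtain ⟨s, hs, rfl⟩ := exists_mem_labelledCopies hf ha x
    obtain ⟨t, ht, rfl⟩ := exists_mem_labelledCopies hf hb x
    exact ⟨s, hs, t, ht, ne_of_apply_ne (fun t => (f t).1) hab⟩
  disjoint := by
    rintro _ ⟨A, x, -, hx, rfl⟩
    exact disjoint_left.2 fun t ht htx => hx.2 (mem_singleton_iff.1 htx ▸ ht.1)
  eq_of_subset := by
    rintro _ ⟨A, x, hA, -, rfl⟩ _ ⟨B, y, -, -, rfl⟩ hsub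
    obtain ⟨a, ha, hay⟩ := hA.exists_ne y
    obtain ⟨t, ht, rfl⟩ := exists_mem_labelledCopies hf ha x
    have htB : t ∈ labelledCopies f B y := (hsub ht).resolve_right hay
    obtain ⟨rfl, rfl⟩ := Prod.ext_iff.1 (ht.2.symm.trans htB.2)
    rfl

theorem impClosedSet_copies (hφ : IsClosureOp φ) (hf : f.Surjective) (hC : IsClosedSet φ C) :
    ImpClosedSet (labelledImplications φ f) (copies f C) := by
  rintro _ ⟨A, x, -, hx, rfl⟩ hsub
  have hAC : A ⊆ C := subset_of_labelledCopies_subset_copies hf hsub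
  have hxC : x ∈ C := hφ.subset_of_isClosedSet hC hAC hx.1
  exact (copies_subset_copies_iff hf).2 (singleton_subset_iff.2 hxC)

theorem copies_closure_subset_impClosure (hX : X.Nontrivial) :
    copies f (φ X) ⊆ ImpClosure (labelledImplications φ f) (copies f X) := by
  intro t ht
  by_cases htX : (f t).1 ∈ X
  · exact subset_impClosure htX
  · have hmem : (labelledCopies f X (f t).1, copies f {(f t).1}) ∈ labelledImplications φ f :=
      ⟨X, (f t).1, hX, ⟨ht, htX⟩, rfl⟩
    exact impClosedSet_impClosure _ hmem
      ((labelledCopies_subset_copies _ subset_rfl).trans subset_impClosure) rfl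

theorem copies_closure_eq_impClosure (hφ : IsClosureOp φ) (hf : f.Surjective)
    (hX : X.Nontrivial ∨ IsClosedSet φ X) :
    copies f (φ X) = ImpClosure (labelledImplications φ f) (copies f X) := by
  obtain hX | hX := hX
  · refine (copies_closure_subset_impClosure hX).antisymm (impClosure_subset ?_ ?_)
    · exact (copies_subset_copies_iff hf).2 (hφ.1 X)
    · exact impClosedSet_copies hφ hf (hφ.2.1 X)
  · rw [(impClosedSet_copies hφ hf hX).isClosedSet, hX]

end LabelledCopies

theorem statement3_general {α β : Type*} {f : β → α × Set α × α} (hf : f.Surjective)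
    {φ : Set α → Set α} (hφ : IsClosureOp φ) :
    ∃ ψ : Set β → Set β, IsClosureOp ψ ∧ IsStandard ψ ∧ EBaseValid ψ ∧
      ∃ g : Set α → Set β,
        (∀ C : Set α, IsClosedSet φ C → IsClosedSet ψ (g C)) ∧
        (∀ C1 C2 : Set α, IsClosedSet φ C1 → IsClosedSet φ C2 →
          (C1 ⊆ C2 ↔ g C1 ⊆ g C2)) ∧
        (∀ C1 C2 : Set α, IsClosedSet φ C1 → IsClosedSet φ C2 →
          g (C1 ∩ C2) = g C1 ∩ g C2) ∧
        (∀ C1 C2 : Set α, IsClosedSet φ C1 → IsClosedSet φ C2 →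
          g (φ (C1 ∪ C2)) = ψ (g C1 ∪ g C2)) := by
  have hS : IsIsolated (labelledImplications φ f) := isIsolated_labelledImplications hf
  refine ⟨ImpClosure (labelledImplications φ f), isClosureOp_impClosure _, hS.isStandard,
    hS.eBaseValid, copies f, ?_, ?_, ?_, ?_⟩
  · exact fun C hC => (impClosedSet_copies hφ hf hC).isClosedSet
  · exact fun C1 C2 _ _ => (copies_subset_copies_iff hf).symm
  · exact fun C1 C2 _ _ => rfl
  · exact fun C1 C2 h1 h2 =>
      copies_closure_eq_impClosure hφ hf (nontrivial_union_or_isClosedSet h1 h2)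

/-- Every finite standard closure space embeds, as a sublattice of
the closure lattice, into a finite standard closure space with valid E-base. -/
theorem statement3 {α : Type*} [Fintype α] (φ : Set α → Set α)
    (hφ : IsClosureOp φ) (hstd : IsStandard φ) :
    ∃ (n : ℕ) (ψ : Set (Fin n) → Set (Fin n)),
      IsClosureOp ψ ∧ IsStandard ψ ∧ EBaseValid ψ ∧
      ∃ g : Set α → Set (Fin n),
        (∀ C : Set α, IsClosedSet φ C → IsClosedSet ψ (g C)) ∧
        (∀ C1 C2 : Set α, IsClosedSet φ C1 → IsClosedSet φ C2 →
          (C1 ⊆ C2 ↔ g C1 ⊆ g C2)) ∧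
        (∀ C1 C2 : Set α, IsClosedSet φ C1 → IsClosedSet φ C2 →
          g (C1 ∩ C2) = g C1 ∩ g C2) ∧
        (∀ C1 C2 : Set α, IsClosedSet φ C1 → IsClosedSet φ C2 →
          g (φ (C1 ∪ C2)) = ψ (g C1 ∪ g C2)) := by
  exact ⟨_, statement3_general (Finite.equivFin (α × Set α × α)).symm.surjective hφ⟩

end EBaseFormal
end

section
/- Let (U, φ) be a finite standard closure space and x ∈ U. The family {C closed : x is not prime in (↓C, ⊆)} is a filter (an upward-closed family) of the closure lattice, and its inclusion-minimal members are exactly the closed sets of the form φ(A) with A an E-generator of x. -/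
namespace EBaseFormal

open Set

variable {α : Type*}

/-!
Non-primality of `x` below `C` is witnessed by D-generators. If `x` lies in the join of two closed
subsets of `C` but in neither of them, a binary-minimal set spanning `x` inside their union is a
D-generator, since its binary part stays in that union. Conversely, let `A` be a D-generator of `x`.
If `x` were prime below `φ A`, then splitting a finite spanning subset of `A` into points would put
`x` in the closure of one of them, that is, in the binary part of `A`, which is impossible; the
splitting needs `x ∉ φ ∅`, and `φ ∅` is empty in a standard space. So the closed sets in which `x`
is not prime are exactly those above the closure of some D-generator, and the minimal ones are the
minimal closures of D-generators.
-/

section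

variable {φ : Set α → Set α} {C X : Set α} {x y : α}

/-- A finitary (algebraic) closure: membership in the closure of a set is witnessed by a finite
subset. Together with finite closures of singletons it replaces finiteness of the ground set. -/
def IsFinitary (φ : Set α → Set α) : Prop :=
  ∀ ⦃X : Set α⦄ ⦃y : α⦄, y ∈ φ X → ∃ Y ⊆ X, Y.Finite ∧ y ∈ φ Y

theorem isFinitary_of_finite [Finite α] (φ : Set α → Set α) : IsFinitary φ :=
  fun X _ hy => ⟨X, Subset.rfl, X.toFinite, hy⟩

theorem mem_binPart_iff : y ∈ binPart φ X ↔ ∃ a ∈ X, y ∈ φ {a} := by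
  simp only [binPart, mem_iUnion, exists_prop]

theorem finite_binPart (hsing : ∀ a, (φ {a}).Finite) (hX : X.Finite) : (binPart φ X).Finite :=
  hX.biUnion fun a _ => hsing a

namespace IsClosureOp

theorem subset_closure (hφ : IsClosureOp φ) (X : Set α) : X ⊆ φ X :=
  hφ.1 X

theorem isClosedSet_closure (hφ : IsClosureOp φ) (X : Set α) : IsClosedSet φ (φ X) :=
  hφ.2.1 X

theorem monotone (hφ : IsClosureOp φ) : Monotone φ :=
  hφ.2.2

theorem closure_subset_iff (hφ : IsClosureOp φ) (hC : IsClosedSet φ C) : φ X ⊆ C ↔ X ⊆ C :=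
  ⟨(hφ.subset_closure X).trans, fun hX => (hφ.monotone hX).trans hC.subset⟩

theorem closure_singleton_subset_iff (hφ : IsClosureOp φ) (hC : IsClosedSet φ C) :
    φ {x} ⊆ C ↔ x ∈ C :=
  (hφ.closure_subset_iff hC).trans singleton_subset_iff

theorem subset_binPart (hφ : IsClosureOp φ) (X : Set α) : X ⊆ binPart φ X :=
  fun a ha => mem_binPart_iff.2 ⟨a, ha, hφ.subset_closure {a} rfl⟩

theorem binPart_subset_union (hφ : IsClosureOp φ) {C₁ C₂ : Set α} (h₁ : IsClosedSet φ C₁)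
    (h₂ : IsClosedSet φ C₂) (hX : X ⊆ C₁ ∪ C₂) : binPart φ X ⊆ C₁ ∪ C₂ :=
  iUnion₂_subset fun _ ha => (hX ha).elim
    (fun ha₁ => subset_union_of_subset_left ((hφ.closure_singleton_subset_iff h₁).2 ha₁) C₂)
    (fun ha₂ => subset_union_of_subset_right ((hφ.closure_singleton_subset_iff h₂).2 ha₂) C₁)

theorem primeIn_iff (hφ : IsClosureOp φ) :
    PrimeIn φ C x ↔ ∀ C₁ C₂ : Set α, IsClosedSet φ C₁ → IsClosedSet φ C₂ → C₁ ⊆ C → C₂ ⊆ C →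
      x ∈ φ (C₁ ∪ C₂) → x ∈ C₁ ∨ x ∈ C₂ := by
  refine forall₄_congr fun C₁ C₂ h₁ h₂ => ?_
  rw [hφ.closure_singleton_subset_iff (hφ.isClosedSet_closure _),
    hφ.closure_singleton_subset_iff h₁, hφ.closure_singleton_subset_iff h₂]

theorem closure_empty_of_isStandard (hφ : IsClosureOp φ) (hstd : IsStandard φ) : φ ∅ = ∅ :=
  eq_empty_of_forall_notMem fun x hx =>
    ((hφ.closure_subset_iff (hstd x)).2 (empty_subset _) hx).2 rfl

end IsClosureOp

theorem PrimeIn.anti {C C' : Set α} (h : PrimeIn φ C' x) (hCC' : C ⊆ C') : PrimeIn φ C x :=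
  fun C₁ C₂ h₁ h₂ hC₁ hC₂ => h C₁ C₂ h₁ h₂ (hC₁.trans hCC') (hC₂.trans hCC')

theorem PrimeIn.mem_binPart (hφ : IsClosureOp φ) (hC : IsClosedSet φ C) (hx : x ∉ φ ∅)
    (hprime : PrimeIn φ C x) {A : Set α} (hA : A.Finite) (hAC : A ⊆ C) (hxA : x ∈ φ A) :
    x ∈ binPart φ A := by
  induction A, hA using Set.Finite.induction_on with
  | empty => exact absurd hxA hx
  | @insert a A _ _ ih =>
    obtain ⟨haC, hAC⟩ := insert_subset_iff.1 hAC
    have hcover : insert a A ⊆ φ {a} ∪ φ A :=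
      union_subset_union (hφ.subset_closure {a}) (hφ.subset_closure A)
    rcases hφ.primeIn_iff.1 hprime (φ {a}) (φ A) (hφ.isClosedSet_closure _)
      (hφ.isClosedSet_closure _) ((hφ.closure_singleton_subset_iff hC).2 haC)
      ((hφ.closure_subset_iff hC).2 hAC) (hφ.monotone hcover hxA) with hxa | hxA
    · exact mem_binPart_iff.2 ⟨a, mem_insert a A, hxa⟩
    · exact biUnion_subset_biUnion_left (subset_insert a A) (ih hAC hxA)

theorem exists_isDGen_binPart_subset (hX : (binPart φ X).Finite) (hxX : x ∈ φ X)
    (hx : x ∉ binPart φ X) : ∃ A, IsDGen φ x A ∧ binPart φ A ⊆ binPart φ X := by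
  let spanning : Set (Set α) := {T | T ⊆ binPart φ X ∧ ∃ A, binPart φ A = T ∧ x ∈ φ A}
  have hfin : spanning.Finite := hX.finite_subsets.subset fun _ hT => hT.1
  obtain ⟨_, -, ⟨hAX, A, rfl, hxA⟩, hmin⟩ :=
    hfin.exists_le_minimal (a := binPart φ X) ⟨Subset.rfl, X, rfl, hxX⟩
  refine ⟨A, ⟨hxA, fun h => hx (hAX h), fun B hBA hxB => ?_⟩, hAX⟩
  exact hBA.not_subset (hmin ⟨hBA.subset.trans hAX, B, rfl, hxB⟩ hBA.subset)

theorem exists_isDGen_of_not_primeIn (hφ : IsClosureOp φ) (hfin : IsFinitary φ)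
    (hsing : ∀ a, (φ {a}).Finite) (hC : IsClosedSet φ C) (h : ¬ PrimeIn φ C x) :
    ∃ A, IsDGen φ x A ∧ φ A ⊆ C := by
  rw [hφ.primeIn_iff] at h
  push Not at h
  obtain ⟨C₁, C₂, h₁, h₂, hC₁, hC₂, hx, hx₁, hx₂⟩ := h
  obtain ⟨F, hF, hFfin, hxF⟩ := hfin hx
  have hbin : binPart φ F ⊆ C₁ ∪ C₂ := hφ.binPart_subset_union h₁ h₂ hF
  obtain ⟨A, hA, hAF⟩ := exists_isDGen_binPart_subset (finite_binPart hsing hFfin) hxF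
    fun hxb => (hbin hxb).elim hx₁ hx₂
  exact ⟨A, hA, (hφ.closure_subset_iff hC).2 <|
    (hφ.subset_binPart A).trans <| hAF.trans <| hbin.trans <| union_subset hC₁ hC₂⟩

theorem IsDGen.not_primeIn_closure {A : Set α} (hA : IsDGen φ x A) (hφ : IsClosureOp φ)
    (hfin : IsFinitary φ) (hx : x ∉ φ ∅) : ¬ PrimeIn φ (φ A) x := by
  intro hprime
  obtain ⟨F, hFA, hF, hxF⟩ := hfin hA.1
  have hxb : x ∈ binPart φ F :=
    hprime.mem_binPart hφ (hφ.isClosedSet_closure A) hx hF (hFA.trans (hφ.subset_closure A)) hxF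
  exact hA.2.1 (biUnion_subset_biUnion_left hFA hxb)

theorem exists_isEGen_closure_eq_iff_minimal :
    (∃ A, IsEGen φ x A ∧ φ A = C) ↔ Minimal (fun D => ∃ A, IsDGen φ x A ∧ φ A = D) C := by
  rw [minimal_subset_iff]
  constructor
  · rintro ⟨A, ⟨hA, hmin⟩, rfl⟩
    refine ⟨⟨A, hA, rfl⟩, ?_⟩
    rintro _ ⟨B, hB, rfl⟩ hBA
    exact (hmin B hB hBA).symm
  · rintro ⟨⟨A, hA, rfl⟩, hmin⟩
    exact ⟨A, ⟨hA, fun B hB hBA => (hmin ⟨B, hB, rfl⟩ hBA).symm⟩, rfl⟩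

end

theorem statement5_general (φ : Set α → Set α) (hφ : IsClosureOp φ) (hfin : IsFinitary φ)
    (hsing : ∀ a, (φ {a}).Finite) (x : α) (hx : x ∉ φ ∅) :
    (∀ C C' : Set α, IsClosedSet φ C → IsClosedSet φ C' → C ⊆ C' →
        ¬ PrimeIn φ C x → ¬ PrimeIn φ C' x) ∧
      {C : Set α | IsClosedSet φ C ∧ ¬ PrimeIn φ C x ∧
          ∀ C' : Set α, IsClosedSet φ C' → ¬ PrimeIn φ C' x → C' ⊆ C → C' = C} =
        {C : Set α | ∃ A : Set α, IsEGen φ x A ∧ φ A = C} := by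
  refine ⟨fun C C' _ _ hCC' => mt fun h => h.anti hCC', ext fun C => ?_⟩
  have hiff : Minimal (fun D => IsClosedSet φ D ∧ ¬ PrimeIn φ D x) C ↔
      Minimal (fun D => ∃ A, IsDGen φ x A ∧ φ A = D) C := by
    apply minimal_iff_minimal_of_imp_of_forall
    · rintro _ ⟨A, hA, rfl⟩
      exact ⟨hφ.isClosedSet_closure A, hA.not_primeIn_closure hφ hfin hx⟩
    · rintro D ⟨hD, hDx⟩
      obtain ⟨A, hA, hAD⟩ := exists_isDGen_of_not_primeIn hφ hfin hsing hD hDx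
      exact ⟨φ A, hAD, A, hA, rfl⟩
  rw [mem_ofPred_eq, mem_ofPred_eq, exists_isEGen_closure_eq_iff_minimal, ← hiff,
    minimal_subset_iff]
  simp only [and_imp, and_assoc, eq_comm]

/-- the family of closed sets in which `x` is not prime is a filter of
the closure lattice, and its inclusion-minimal members are exactly the closures of
the E-generators of `x`. -/
theorem statement5 {α : Type*} [Fintype α] (φ : Set α → Set α)
    (hφ : IsClosureOp φ) (hstd : IsStandard φ) (x : α) :
    (∀ C C' : Set α, IsClosedSet φ C → IsClosedSet φ C' → C ⊆ C' →
        ¬ PrimeIn φ C x → ¬ PrimeIn φ C' x) ∧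
      {C : Set α | IsClosedSet φ C ∧ ¬ PrimeIn φ C x ∧
          ∀ C' : Set α, IsClosedSet φ C' → ¬ PrimeIn φ C' x → C' ⊆ C → C' = C} =
        {C : Set α | ∃ A : Set α, IsEGen φ x A ∧ φ A = C} :=
  statement5_general φ hφ (isFinitary_of_finite φ) (fun a => (φ {a}).toFinite) x
    (by simp [hφ.closure_empty_of_isStandard hstd])

end EBaseFormal
end

section
/- Let (U, φ) be a finite standard closure space and let Σ be any set of implications over U whose induced closure operator equals φ. Then for every x ∈ U and every closed set C of the form C = φ(B) with B an E-generator of x, Σ contains an implication (A, Y) with x ∉ A and φ(A) = C. -/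
namespace EBaseFormal

open Set

variable {α : Type*}

/-!
Let `B` be an E-generator of `x` and let `T` be the set of those `y ∈ φ B` that do not generate
`x` on their own (`nonGenerating`). Then `B ⊆ T`, but `x ∈ φ B \ T`, so some implication `(A, Y)`
of the base has `A ⊆ T` and `Y ⊈ T`. An element of `Y` outside `T` lies in `φ A` and generates `x`
by itself, hence `x ∈ φ A`, while `A ⊆ T` gives `x ∉ φ^b(A)`. A `φ^b`-minimal refinement of `A`
that still generates `x` is a D-generator of `x` with closure inside `φ A ⊆ φ B`, and minimality
of `φ B` forces `φ A = φ B`.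
-/

section ClosureOperator

variable {φ : Set α → Set α} {x y : α} {A B X Y : Set α}

theorem IsClosureOp.subset_closure_s10 (hφ : IsClosureOp φ) (X : Set α) : X ⊆ φ X :=
  hφ.1 X

theorem IsClosureOp.closure_subset_closure_iff (hφ : IsClosureOp φ) : φ X ⊆ φ Y ↔ X ⊆ φ Y :=
  ⟨(hφ.subset_closure_s10 X).trans, fun h => (hφ.2.2 X (φ Y) h).trans_eq (hφ.2.1 Y)⟩

theorem IsClosureOp.closure_singleton_subset_iff_s10 (hφ : IsClosureOp φ) :
    φ {y} ⊆ φ X ↔ y ∈ φ X :=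
  hφ.closure_subset_closure_iff.trans singleton_subset_iff

theorem mem_binPart : y ∈ binPart φ X ↔ ∃ z ∈ X, y ∈ φ {z} := by
  simp only [binPart, mem_iUnion, exists_prop]

theorem IsClosureOp.subset_binPart_s10 (hφ : IsClosureOp φ) (X : Set α) : X ⊆ binPart φ X :=
  fun y hy => mem_binPart.2 ⟨y, hy, hφ.subset_closure_s10 {y} rfl⟩

theorem IsClosureOp.binPart_subset_closure (hφ : IsClosureOp φ) (X : Set α) :
    binPart φ X ⊆ φ X :=
  iUnion₂_subset fun _ hz => hφ.closure_singleton_subset_iff_s10.2 (hφ.subset_closure_s10 X hz)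

theorem IsClosureOp.closure_subset_closure_of_binPart_subset (hφ : IsClosureOp φ)
    (h : binPart φ X ⊆ binPart φ Y) : φ X ⊆ φ Y :=
  hφ.closure_subset_closure_iff.2
    ((hφ.subset_binPart_s10 X).trans (h.trans (hφ.binPart_subset_closure Y)))

theorem exists_isDGen_binPart_subset_s10 (hwf : (range (binPart φ)).IsWF)
    (hxA : x ∈ φ A) (hxbA : x ∉ binPart φ A) :
    ∃ G, IsDGen φ x G ∧ binPart φ G ⊆ binPart φ A := by
  have hrefine : binPart φ '' {G | x ∈ φ G ∧ binPart φ G ⊆ binPart φ A} ⊆ range (binPart φ) :=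
    image_subset_range _ _
  obtain ⟨_, ⟨⟨G, ⟨hxG, hGA⟩, rfl⟩, hmin⟩⟩ :=
    (hwf.mono hrefine).exists_minimal ⟨_, A, ⟨hxA, Subset.rfl⟩, rfl⟩
  refine ⟨G, ⟨hxG, fun h => hxbA (hGA h), fun D hDG hxD => ?_⟩, hGA⟩
  exact hDG.not_subset (hmin ⟨D, ⟨hxD, hDG.subset.trans hGA⟩, rfl⟩ hDG.subset)

theorem IsEGen.closure_eq_of_closure_subset (hB : IsEGen φ x B) (hφ : IsClosureOp φ)
    (hwf : (range (binPart φ)).IsWF) (hxA : x ∈ φ A) (hxbA : x ∉ binPart φ A)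
    (hAB : φ A ⊆ φ B) : φ A = φ B := by
  obtain ⟨G, hG, hGA⟩ := exists_isDGen_binPart_subset_s10 hwf hxA hxbA
  have hφGA : φ G ⊆ φ A := hφ.closure_subset_closure_of_binPart_subset hGA
  have hφGB : φ G = φ B := hB.2 G hG (hφGA.trans hAB)
  exact hAB.antisymm (hφGB.symm.trans_subset hφGA)

end ClosureOperator

section Implications

variable {φ : Set α → Set α} {S : Set (Set α × Set α)} {x : α} {A B C T Y Z : Set α}

theorem ImpClosedSet.impClosure_subset (hT : ImpClosedSet S T) (hZ : Z ⊆ T) :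
    ImpClosure S Z ⊆ T :=
  sInter_subset_of_mem ⟨hZ, hT⟩

theorem subset_impClosure_of_mem (h : (A, Y) ∈ S) : Y ⊆ ImpClosure S A :=
  subset_sInter fun _ hT => hT.2 _ h hT.1

theorem not_impClosedSet_iff :
    ¬ ImpClosedSet S T ↔ ∃ A Y, (A, Y) ∈ S ∧ A ⊆ T ∧ ¬ Y ⊆ T := by
  simp only [ImpClosedSet, Prod.forall, not_forall, exists_prop]

/-- The elements of `C` that do not generate `x` on their own. If `C` is closed, then the premise of
a valid implication violated by this set generates `x`, but no element of it alone does. -/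
def nonGenerating (φ : Set α → Set α) (x : α) (C : Set α) : Set α :=
  {y ∈ C | x ∉ φ {y}}

theorem subset_nonGenerating_iff :
    A ⊆ nonGenerating φ x C ↔ A ⊆ C ∧ x ∉ binPart φ A := by
  simp only [nonGenerating, subset_def, mem_ofPred_eq, mem_binPart, not_exists, not_and,
    forall_and]

theorem IsClosureOp.exists_nonbinary_implication (hφ : IsClosureOp φ)
    (hS : ∀ Z, ImpClosure S Z = φ Z) (hxB : x ∈ φ B) (hxbB : x ∉ binPart φ B) :
    ∃ A Y, (A, Y) ∈ S ∧ x ∈ φ A ∧ x ∉ binPart φ A ∧ φ A ⊆ φ B := by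
  have hB : B ⊆ nonGenerating φ x (φ B) :=
    subset_nonGenerating_iff.2 ⟨hφ.subset_closure_s10 B, hxbB⟩
  have hnotClosed : ¬ ImpClosedSet S (nonGenerating φ x (φ B)) := fun h =>
    (h.impClosure_subset hB (hS B ▸ hxB)).2 (hφ.subset_closure_s10 {x} rfl)
  obtain ⟨A, Y, hAY, hA, hY⟩ := not_impClosedSet_iff.1 hnotClosed
  obtain ⟨hAφB, hxbA⟩ := subset_nonGenerating_iff.1 hA
  have hAB : φ A ⊆ φ B := hφ.closure_subset_closure_iff.2 hAφB
  have hYA : Y ⊆ φ A := (subset_impClosure_of_mem hAY).trans_eq (hS A)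
  obtain ⟨y, hyY, hy⟩ := not_subset.1 hY
  have hxy : x ∈ φ {y} := by
    by_contra hxy
    exact hy ⟨hAB (hYA hyY), hxy⟩
  exact ⟨A, Y, hAY, hφ.closure_singleton_subset_iff_s10.2 (hYA hyY) hxy, hxbA, hAB⟩

theorem statement10_general (hφ : IsClosureOp φ) (hwf : (range (binPart φ)).IsWF)
    (hS : ∀ Z, ImpClosure S Z = φ Z) (hB : IsEGen φ x B) :
    ∃ A Y, (A, Y) ∈ S ∧ x ∉ A ∧ φ A = φ B := by
  obtain ⟨A, Y, hAY, hxA, hxbA, hAB⟩ := hφ.exists_nonbinary_implication hS hB.1.1 hB.1.2.1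
  exact ⟨A, Y, hAY, fun hx => hxbA (hφ.subset_binPart_s10 A hx),
    hB.closure_eq_of_closure_subset hφ hwf hxA hxbA hAB⟩

end Implications

/-- every valid implicational base contains, for each closed set `C`
that is the closure of an E-generator of `x`, an implication `(A, Y)` with `x ∉ A`
and `φ A = C`. -/
theorem statement10 {α : Type*} [Fintype α] (φ : Set α → Set α)
    (hφ : IsClosureOp φ) (hstd : IsStandard φ)
    (S : Set (Set α × Set α)) (hS : ∀ Z : Set α, ImpClosure S Z = φ Z)
    (x : α) (B C : Set α) (hB : IsEGen φ x B) (hC : C = φ B) :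
    ∃ A Y : Set α, (A, Y) ∈ S ∧ x ∉ A ∧ φ A = C := by
  subst hC
  exact statement10_general hφ (toFinite (range (binPart φ))).isWF hS hB

end EBaseFormal
end
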